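/- Let G be a finite graph with twins u, v (distinct vertices with N_G(u) = N_G(v)). Then the rankwidth of G equals the rankwidth of G − v, provided G − v has at least 2 vertices. In particular, adding a twin of an existing vertex never increases rankwidth. -/

import Mathlib

open Classical in
/-- The cut-rank of a vertex set `A` in a finite simple graph `G`: the rank over the
two-element field `GF(2)` of the biadjacency matrix whose rows are indexed by `A`, whose
columns are indexed by the complement `V(G) \ A`, and whose `(u, w)` entry is `1` iff
`uw` is an edge of `G`. -/
noncomputable def SimpleGraph.cutrk {V : Type*} [Finite V] (G : SimpleGraph V)
    (A : Set V) : ℕ :=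
  haveI : Fintype ↥A := Fintype.ofFinite ↥A
  haveI : Fintype ↥(Aᶜ) := Fintype.ofFinite ↥(Aᶜ)
  Matrix.rank (Matrix.of fun (u : ↥A) (w : ↥(Aᶜ)) =>
    if G.Adj u.1 w.1 then (1 : ZMod 2) else 0)

/-- `T` is a cubic tree (every vertex has degree `1` or `3`) whose leaves are bijectively
labelled by the elements of `V` via `lam`. -/
def IsRankDecompTree {V : Type*} {N : ℕ} (T : SimpleGraph (Fin N)) (lam : V → Fin N) : Prop :=
  T.IsTree ∧ (∀ w : Fin N, (T.neighborSet w).ncard = 1 ∨ (T.neighborSet w).ncard = 3) ∧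
    Function.Injective lam ∧ (∀ v : V, (T.neighborSet (lam v)).ncard = 1) ∧
    (∀ w : Fin N, (T.neighborSet w).ncard = 1 → ∃ v : V, lam v = w)

/-- `G` (with at least two vertices) admits a rank decomposition of width at most `k`:
a cubic tree whose leaves are labelled by the vertices of `G` such that for every oriented
edge `xy` of the tree, the cut-rank in `G` of the set of vertices whose leaves lie on the
`x`-side is at most `k`. -/
def HasRankDecompOfWidthLE {V : Type*} [Finite V] (G : SimpleGraph V) (k : ℕ) : Prop :=
  2 ≤ Nat.card V ∧
    ∃ (N : ℕ) (T : SimpleGraph (Fin N)) (lam : V → Fin N),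
      IsRankDecompTree T lam ∧
        ∀ x y : Fin N, T.Adj x y →
          G.cutrk {v : V | T.dist (lam v) x < T.dist (lam v) y} ≤ k

/-- The rankwidth of a finite graph: the least width of a rank decomposition of it. -/
noncomputable def rankwidth {V : Type*} [Finite V] (G : SimpleGraph V) : ℕ :=
  sInf {k | HasRankDecompOfWidthLE G k}

section Cutrk

theorem rw_cutrk_comap_le {V V' : Type*} [Finite V] [Finite V'] (G : SimpleGraph V)
    (H : SimpleGraph V') (f : V → V') (B : Set V')
    (h : ∀ a b, f a ∈ B → f b ∉ B → (G.Adj a b ↔ H.Adj (f a) (f b))) :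
    G.cutrk (f ⁻¹' B) ≤ H.cutrk B := by
  classical
  unfold SimpleGraph.cutrk
  let _ : Fintype ↥B := Fintype.ofFinite ↥B
  let _ : Fintype ↥(Bᶜ) := Fintype.ofFinite ↥(Bᶜ)
  let _ : Fintype ↥(f ⁻¹' B) := Fintype.ofFinite _
  let _ : Fintype ↥((f ⁻¹' B)ᶜ) := Fintype.ofFinite _
  refine le_trans (le_of_eq ?_) (Matrix.rank_submatrix_le (R := ZMod 2) _
    (fun a : ↥(f ⁻¹' B) => (⟨f a.1, a.2⟩ : ↥B))
    (fun a : ↥((f ⁻¹' B)ᶜ) => (⟨f a.1, a.2⟩ : ↥(Bᶜ))))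
  congr 1
  ext a b
  have := h a.1 b.1 a.2 b.2
  simp [this]

theorem rw_cutrk_compl_le {V : Type*} [Finite V] (G : SimpleGraph V) (A : Set V) :
    G.cutrk Aᶜ ≤ G.cutrk A := by
  classical
  unfold SimpleGraph.cutrk
  let _ : Fintype ↥A := Fintype.ofFinite ↥A
  let _ : Fintype ↥(Aᶜ) := Fintype.ofFinite ↥(Aᶜ)
  let _ : Fintype ↥(Aᶜᶜ) := Fintype.ofFinite _
  rw [← Matrix.rank_transpose (R := ZMod 2) (m := ↥A)]
  refine le_trans (le_of_eq ?_) (Matrix.rank_submatrix_le (R := ZMod 2) _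
    (fun a : ↥(Aᶜ) => a)
    (fun a : ↥(Aᶜᶜ) => (⟨a.1, not_not.1 a.2⟩ : ↥A)))
  congr 1
  ext a b
  simp [G.adj_comm]

theorem rw_cutrk_singleton_le {V : Type*} [Finite V] (G : SimpleGraph V) (a : V) :
    G.cutrk {a} ≤ 1 := by
  classical
  unfold SimpleGraph.cutrk
  let _ : Fintype ↥({a} : Set V) := Fintype.ofFinite _
  let _ : Fintype ↥(({a} : Set V)ᶜ) := Fintype.ofFinite _
  refine (Matrix.rank_le_card_height _).trans ?_
  simp

theorem rw_cutrk_singleton_zero {V : Type*} [Finite V] (G : SimpleGraph V) (a : V)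
    (h : ∀ b, ¬ G.Adj a b) : G.cutrk {a} = 0 := by
  classical
  unfold SimpleGraph.cutrk
  let _ : Fintype ↥({a} : Set V) := Fintype.ofFinite _
  let _ : Fintype ↥(({a} : Set V)ᶜ) := Fintype.ofFinite _
  refine Eq.trans ?_ (Matrix.rank_zero (R := ZMod 2) (m := ↥({a} : Set V))
    (n := ↥(({a} : Set V)ᶜ)))
  congr 1
  ext x y
  have : x.1 = a := x.2
  simp [this, h]

theorem rw_one_le_cutrk {V : Type*} [Finite V] (G : SimpleGraph V) (A : Set V) (a b : V)
    (ha : a ∈ A) (hb : b ∉ A) (h : G.Adj a b) : 1 ≤ G.cutrk A := by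
  classical
  unfold SimpleGraph.cutrk
  let _ : Fintype ↥A := Fintype.ofFinite ↥A
  let _ : Fintype ↥(Aᶜ) := Fintype.ofFinite ↥(Aᶜ)
  refine le_trans (le_of_eq ?_) (Matrix.rank_submatrix_le (R := ZMod 2) _
    (fun _ : Unit => (⟨a, ha⟩ : ↥A))
    (fun _ : Unit => (⟨b, hb⟩ : ↥(Aᶜ))))
  have h1 := Matrix.rank_one (R := ZMod 2) (n := Unit)
  rw [Fintype.card_unit] at h1
  rw [← h1]
  congr 1
  ext i j
  simp [h]

end Cutrk

section Cuts

/-- `xy` is the only edge leaving `S`. -/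
def RWCut {W : Type*} (T : SimpleGraph W) (x y : W) (S : Set W) : Prop :=
  x ∈ S ∧ y ∉ S ∧ ∀ a b, a ∈ S → b ∉ S → T.Adj a b → a = x ∧ b = y

theorem RWCut.compl {W : Type*} {T : SimpleGraph W} {x y : W} {S : Set W}
    (h : RWCut T x y S) : RWCut T y x Sᶜ := by
  refine ⟨h.2.1, not_not.2 h.1, fun a b ha hb hab => ?_⟩
  exact (h.2.2 b a (not_not.1 hb) ha hab.symm).symm

theorem RWCut.walk {W : Type*} {T : SimpleGraph W} (hT : T.Connected) {x y : W} {S : Set W}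
    (h : RWCut T x y S) {w z : W} (p : T.Walk w z) (hw : w ∈ S) (hz : z ∉ S) :
    T.dist w x + 1 ≤ p.length := by
  induction p with
  | nil => exact absurd hw hz
  | @cons a b c hab q ih =>
    rw [SimpleGraph.Walk.length_cons]
    by_cases hb : b ∈ S
    · have h1 := ih hb hz
      have h2 := hT.dist_triangle (u := a) (v := b) (w := x)
      have h3 : T.dist a b = 1 := SimpleGraph.dist_eq_one_iff_adj.2 hab
      omega
    · have := (h.2.2 a b hw hb hab).1
      subst this
      simp

theorem RWCut.side {W : Type*} {T : SimpleGraph W} (hT : T.Connected) {x y : W} {S : Set W}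
    (h : RWCut T x y S) : {w | T.dist w x < T.dist w y} = S := by
  ext w
  simp only [Set.mem_ofPred_eq]
  constructor
  · intro hlt
    by_contra hw
    obtain ⟨p, hp⟩ := hT.exists_walk_length_eq_dist w x
    have := h.compl.walk hT p hw h.compl.2.1
    omega
  · intro hw
    obtain ⟨p, hp⟩ := hT.exists_walk_length_eq_dist w y
    have := h.walk hT p hw h.2.1
    omega

theorem rw_exists_cut {W : Type*} {T : SimpleGraph W} (hT : T.IsAcyclic) {x y : W}
    (h : T.Adj x y) : ∃ S, RWCut T x y S := by
  have hb := SimpleGraph.isBridge_iff.1 (SimpleGraph.isAcyclic_iff_forall_adj_isBridge.1 hT h)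
  refine ⟨{w | (T.deleteEdges {s(x, y)}).Reachable x w}, SimpleGraph.Reachable.refl _, hb, ?_⟩
  intro a b ha hb' hab
  by_contra hne
  have : (T.deleteEdges {s(x, y)}).Adj a b := by
    rw [SimpleGraph.deleteEdges_adj]
    refine ⟨hab, ?_⟩
    simp only [Set.mem_singleton_iff, Sym2.eq_iff]
    rintro (h1 | ⟨rfl, rfl⟩)
    · exact hne h1
    · exact hb ha
  exact hb' (SimpleGraph.Reachable.trans ha this.reachable)

theorem RWCut.reach {W : Type*} {T : SimpleGraph W} {x y : W} {S : Set W}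
    (h : RWCut T x y S) {w z : W} (p : (T.deleteEdges {s(x, y)}).Walk w z) (hw : w ∈ S) :
    z ∈ S := by
  induction p with
  | nil => exact hw
  | @cons a b c hab q ih =>
    apply ih
    by_contra hb
    rw [SimpleGraph.deleteEdges_adj] at hab
    obtain ⟨rfl, rfl⟩ := h.2.2 a b hw hb hab.1
    exact hab.2 rfl

theorem rw_acyclic_of_cuts {W : Type*} {T : SimpleGraph W}
    (h : ∀ x y, T.Adj x y → ∃ S, RWCut T x y S) : T.IsAcyclic := by
  rw [SimpleGraph.isAcyclic_iff_forall_adj_isBridge]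
  intro x y hxy
  obtain ⟨S, hS⟩ := h x y hxy
  rw [SimpleGraph.isBridge_iff]
  rintro ⟨p⟩
  exact hS.2.1 (hS.reach p hS.1)

/-- Reachability is preserved by maps sending edges to edges or points. -/
theorem rw_reach_map {W W' : Type*} {T : SimpleGraph W} {T' : SimpleGraph W'} (f : W → W')
    (h : ∀ a b, T.Adj a b → f a = f b ∨ T'.Adj (f a) (f b)) {a b : W}
    (hab : T.Reachable a b) : T'.Reachable (f a) (f b) := by
  obtain ⟨p⟩ := hab
  induction p with
  | nil => exact SimpleGraph.Reachable.refl _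
  | @cons a b c hab q ih =>
    rcases h a b hab with h1 | h1
    · rw [h1]; exact ih
    · exact h1.reachable.trans ih

/-- Reformulation of rank decompositions with cuts, on an arbitrary finite node type. -/
def RWDecomp {V : Type*} [Finite V] (G : SimpleGraph V) (k : ℕ) : Prop :=
  ∃ (W : Type) (_ : Finite W) (T : SimpleGraph W) (lam : V → W),
    T.Connected ∧
    (∀ w, (T.neighborSet w).ncard = 1 ∨ (T.neighborSet w).ncard = 3) ∧
    Function.Injective lam ∧ (∀ v : V, (T.neighborSet (lam v)).ncard = 1) ∧
    (∀ w, (T.neighborSet w).ncard = 1 → ∃ v : V, lam v = w) ∧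
    ∀ x y, T.Adj x y → ∃ S, RWCut T x y S ∧ G.cutrk (lam ⁻¹' S) ≤ k

theorem rw_decomp_iff {V : Type*} [Finite V] (G : SimpleGraph V) (k : ℕ) (h2 : 2 ≤ Nat.card V) :
    HasRankDecompOfWidthLE G k ↔ RWDecomp G k := by
  constructor
  · rintro ⟨_, N, T, lam, ⟨hT, h3, hinj, hl, hs⟩, hk⟩
    refine ⟨Fin N, inferInstance, T, lam, hT.1, h3, hinj, hl, hs, fun x y hxy => ?_⟩
    obtain ⟨S, hS⟩ := rw_exists_cut hT.2 hxy
    refine ⟨S, hS, ?_⟩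
    have := hk x y hxy
    rw [← hS.side hT.1]
    exact this
  · rintro ⟨W, hW, T, lam, hT, h3, hinj, hl, hs, hk⟩
    obtain ⟨N, ⟨e⟩⟩ := Finite.exists_equiv_fin W
    have hcon : (T.comap e.symm).Connected := by
      have : Nonempty (Fin N) := ⟨e hT.nonempty.some⟩
      refine SimpleGraph.Connected.mk fun a b => ?_
      have := rw_reach_map (T' := T.comap e.symm) e (fun a b hab => Or.inr (by simpa using hab))
        (hT.preconnected (e.symm a) (e.symm b))
      simpa using this
    have hcard : ∀ w, ((T.comap e.symm).neighborSet (e w)).ncard = (T.neighborSet w).ncard := by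
      intro w
      rw [← Set.ncard_image_of_injective (T.neighborSet w) e.injective]
      congr 1
      ext z
      simp only [SimpleGraph.mem_neighborSet, SimpleGraph.comap_adj, Set.mem_image,
        Equiv.symm_apply_apply]
      constructor
      · intro h; exact ⟨_, h, by simp⟩
      · rintro ⟨x, hx, rfl⟩; simpa using hx
    have hcut : ∀ x y, (T.comap e.symm).Adj x y → ∃ S, RWCut (T.comap e.symm) x y S ∧
        G.cutrk ((e ∘ lam) ⁻¹' S) ≤ k := by
      intro x y hxy
      obtain ⟨S, hS, hSk⟩ := hk _ _ hxy
      refine ⟨e.symm ⁻¹' S, ⟨hS.1, hS.2.1, fun a b ha hb hab => ?_⟩, ?_⟩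
      · have := hS.2.2 _ _ ha hb hab
        simpa using this
      · have : (e ∘ lam) ⁻¹' (e.symm ⁻¹' S) = lam ⁻¹' S := by ext; simp
        rw [this]; exact hSk
    refine ⟨h2, N, T.comap e.symm, e ∘ lam, ⟨⟨hcon, ?_⟩, ?_, ?_, ?_, ?_⟩, ?_⟩
    · exact rw_acyclic_of_cuts fun x y hxy => (hcut x y hxy).imp fun S h => h.1
    · intro w
      obtain ⟨w, rfl⟩ := e.surjective w
      rw [hcard]; exact h3 w
    · exact e.injective.comp hinj
    · intro v
      exact (hcard _).trans (hl v)
    · intro w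
      obtain ⟨w, rfl⟩ := e.surjective w
      rw [hcard]
      intro h
      obtain ⟨v, rfl⟩ := hs w h
      exact ⟨v, rfl⟩
    · intro x y hxy
      obtain ⟨S, hS, hSk⟩ := hcut x y hxy
      have h1 := hS.side hcon
      have : {v : V | (T.comap e.symm).dist ((e ∘ lam) v) x <
        (T.comap e.symm).dist ((e ∘ lam) v) y} = (e ∘ lam) ⁻¹' S := by
        rw [← h1]; rfl
      rw [this]; exact hSk

end Cuts

section Extend

/-- Attach two new leaves at `l`. -/
def rwExt {W : Type*} (T : SimpleGraph W) (l : W) : SimpleGraph (W ⊕ Bool) where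
  Adj a b := match a, b with
    | Sum.inl x, Sum.inl y => T.Adj x y
    | Sum.inl x, Sum.inr _ => x = l
    | Sum.inr _, Sum.inl y => y = l
    | Sum.inr _, Sum.inr _ => False
  symm := ⟨by
    rintro (a | a) (b | b) h
    · exact T.symm.symm _ _ h
    · exact h
    · exact h
    · exact h⟩
  loopless := ⟨by
    rintro (a | a) h
    · exact T.loopless.irrefl a h
    · exact h⟩

theorem rw_extend {V : Type*} [Fintype V] (G : SimpleGraph V) (u v : V)
    (huv : u ≠ v) (htwin : G.neighborSet u = G.neighborSet v) (k : ℕ)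
    (h : RWDecomp (G.induce ({v}ᶜ : Set V)) k) : RWDecomp G k := by
  classical
  have htw : ∀ z, G.Adj u z ↔ G.Adj v z := fun z => by
    rw [← SimpleGraph.mem_neighborSet, htwin, SimpleGraph.mem_neighborSet]
  obtain ⟨W, hW, T, lam, hT, h3, hinj, hl, hs, hk⟩ := h
  let u' : ({v}ᶜ : Set V) := ⟨u, huv⟩
  let l := lam u'
  let φ : V → ({v}ᶜ : Set V) := fun w => if hw : w = v then u' else ⟨w, hw⟩
  have hφv : φ v = u' := by simp [φ]
  have hφ : ∀ w (hw : w ≠ v), φ w = ⟨w, hw⟩ := fun w hw => by simp [φ, hw]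
  have hφadj : ∀ a b, G.Adj a b ↔ (G.induce ({v}ᶜ : Set V)).Adj (φ a) (φ b) := by
    intro a b
    by_cases ha : a = v <;> by_cases hb : b = v
    · subst ha; subst hb; simp
    · subst ha; rw [hφv, hφ b hb]; simp [u', htw]
    · subst hb; rw [hφv, hφ a ha]; simp only [SimpleGraph.induce_adj, u']
      rw [G.adj_comm, ← htw, G.adj_comm]
    · rw [hφ a ha, hφ b hb]; simp
  -- the leaf cut
  obtain ⟨p, hp⟩ := Set.ncard_eq_one.1 (hl u')
  have hlp : T.Adj l p := by
    have : p ∈ T.neighborSet (lam u') := by rw [hp]; rfl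
    exact this
  have hcutl : RWCut T l p {l} := by
    refine ⟨rfl, fun h => hlp.ne h.symm, ?_⟩
    rintro a b rfl hb hab
    have : b ∈ T.neighborSet (lam u') := hab
    rw [hp] at this
    exact ⟨rfl, this⟩
  have huk : ∀ w, G.Adj u w → 1 ≤ k := by
    intro w huw
    obtain ⟨S, hS, hSk⟩ := hk _ _ hlp
    have hSl : S = {l} := by rw [← hS.side hT, ← hcutl.side hT]
    subst hSl
    have hwv : w ≠ v := by
      rintro rfl
      exact G.loopless.irrefl _ ((htw _).1 huw)
    refine le_trans (rw_one_le_cutrk _ _ u' ⟨w, hwv⟩ ?_ ?_ ?_) hSk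
    · rfl
    · intro h
      have := hinj h
      exact huw.ne (congrArg Subtype.val this).symm
    · exact huw
  have hsing : ∀ w, (w = u ∨ w = v) → G.cutrk {w} ≤ k := by
    intro w hw
    by_cases hex : ∃ z, G.Adj u z
    · obtain ⟨z, hz⟩ := hex
      exact (rw_cutrk_singleton_le G w).trans (huk z hz)
    · rw [rw_cutrk_singleton_zero]
      · exact Nat.zero_le _
      · intro b hb
        apply hex
        rcases hw with rfl | rfl
        · exact ⟨b, hb⟩
        · exact ⟨b, (htw b).2 hb⟩
  let lam' : V → W ⊕ Bool := fun w =>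
    if w = v then Sum.inr true else if w = u then Sum.inr false else Sum.inl (lam (φ w))
  have hlv : lam' v = Sum.inr true := by simp [lam']
  have hlu : lam' u = Sum.inr false := by simp [lam', huv]
  have hlw : ∀ w, w ≠ v → w ≠ u → lam' w = Sum.inl (lam (φ w)) := fun w h1 h2 => by
    simp [lam', h1, h2]
  have hne : ∀ w, w ≠ v → w ≠ u → lam (φ w) ≠ l := by
    intro w h1 h2 h
    have := hinj h
    rw [hφ w h1] at this
    exact h2 (congrArg Subtype.val this)
  have hpre : ∀ b, ∃ w, (w = u ∨ w = v) ∧ lam' ⁻¹' {Sum.inr b} = {w} := by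
    intro b
    cases b
    · refine ⟨u, Or.inl rfl, ?_⟩
      ext w
      by_cases h1 : w = v
      · subst h1; simp [hlv, huv.symm]
      · by_cases h2 : w = u
        · subst h2; simp [hlu]
        · simp [hlw w h1 h2, h2]
    · refine ⟨v, Or.inr rfl, ?_⟩
      ext w
      by_cases h1 : w = v
      · subst h1; simp [hlv]
      · by_cases h2 : w = u
        · subst h2; simp [hlu, h1]
        · simp [hlw w h1 h2, h1]
  have hcutb : ∀ b, RWCut (rwExt T l) (Sum.inr b) (Sum.inl l) {Sum.inr b} := by
    intro b
    refine ⟨rfl, by simp, ?_⟩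
    rintro a c rfl hc hac
    rcases c with c | c
    · have : c = l := hac
      exact ⟨rfl, by rw [this]⟩
    · exact absurd hac id
  have hnl : ∀ x, x ≠ l → (rwExt T l).neighborSet (Sum.inl x) = Sum.inl '' T.neighborSet x := by
    intro x hx
    ext z
    rcases z with z | z
    · simp only [SimpleGraph.mem_neighborSet, Set.mem_image, Sum.inl.injEq, exists_eq_right]
      exact Iff.rfl
    · simp only [SimpleGraph.mem_neighborSet, Set.mem_image, reduceCtorEq, and_false, exists_false,
        iff_false]
      exact hx
  have hnll : (rwExt T l).neighborSet (Sum.inl l) =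
      {Sum.inl p, Sum.inr true, Sum.inr false} := by
    ext z
    rcases z with z | z
    · have : z ∈ T.neighborSet (lam u') ↔ z = p := by rw [hp]; rfl
      simp only [SimpleGraph.mem_neighborSet, Set.mem_insert_iff, Sum.inl.injEq,
        Set.mem_singleton_iff, reduceCtorEq, or_false]
      exact this
    · simp only [SimpleGraph.mem_neighborSet]
      have : (rwExt T l).Adj (Sum.inl l) (Sum.inr z) := rfl
      cases z <;> simp [this]
  have hnr : ∀ b, (rwExt T l).neighborSet (Sum.inr b) = {Sum.inl l} := by
    intro b
    ext z
    rcases z with z | z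
    · simp only [SimpleGraph.mem_neighborSet, Set.mem_singleton_iff, Sum.inl.injEq]
      exact Iff.rfl
    · simp only [SimpleGraph.mem_neighborSet, Set.mem_singleton_iff, reduceCtorEq, iff_false]
      exact id
  have hcl : ((rwExt T l).neighborSet (Sum.inl l)).ncard = 3 := by
    rw [hnll, Set.ncard_eq_three]
    exact ⟨_, _, _, by simp, by simp, by simp, rfl⟩
  have hcx : ∀ x, x ≠ l →
      ((rwExt T l).neighborSet (Sum.inl x)).ncard = (T.neighborSet x).ncard := by
    intro x hx
    rw [hnl x hx, Set.ncard_image_of_injective _ Sum.inl_injective]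
  have hcr : ∀ b, ((rwExt T l).neighborSet (Sum.inr b)).ncard = 1 := by
    intro b; rw [hnr, Set.ncard_singleton]
  refine ⟨W ⊕ Bool, inferInstance, rwExt T l, lam', ?_, ?_, ?_, ?_, ?_, ?_⟩
  · have key : ∀ z, (rwExt T l).Reachable (Sum.inl l) z := by
      rintro (z | b)
      · exact rw_reach_map (T' := rwExt T l) Sum.inl (fun a b hab => Or.inr hab)
          (hT.preconnected l z)
      · have : (rwExt T l).Adj (Sum.inl l) (Sum.inr b) := rfl
        exact this.reachable
    have : Nonempty (W ⊕ Bool) := ⟨Sum.inl l⟩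
    exact SimpleGraph.Connected.mk fun a b => (key a).symm.trans (key b)
  · rintro (x | b)
    · by_cases hx : x = l
      · subst hx; exact Or.inr hcl
      · rw [hcx x hx]; exact h3 x
    · exact Or.inl (hcr b)
  · intro a b hab
    by_cases ha : a = v <;> by_cases hb : b = v
    · rw [ha, hb]
    · exfalso; subst ha
      by_cases hb2 : b = u
      · subst hb2; rw [hlv, hlu] at hab; simp at hab
      · rw [hlv, hlw b hb hb2] at hab; simp at hab
    · exfalso; subst hb
      by_cases hb2 : a = u
      · subst hb2; rw [hlv, hlu] at hab; simp at hab
      · rw [hlv, hlw a ha hb2] at hab; simp at hab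
    · by_cases ha2 : a = u <;> by_cases hb2 : b = u
      · rw [ha2, hb2]
      · exfalso; subst ha2; rw [hlu, hlw b hb hb2] at hab; simp at hab
      · exfalso; subst hb2; rw [hlu, hlw a ha ha2] at hab; simp at hab
      · rw [hlw a ha ha2, hlw b hb hb2] at hab
        have := hinj (Sum.inl_injective hab)
        rw [hφ a ha, hφ b hb] at this
        exact congrArg Subtype.val this
  · intro w
    by_cases h1 : w = v
    · subst h1; rw [hlv]; exact hcr _
    · by_cases h2 : w = u
      · subst h2; rw [hlu]; exact hcr _
      · rw [hlw w h1 h2, hcx _ (hne w h1 h2)]; exact hl _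
  · rintro (x | b) hx
    · by_cases hxl : x = l
      · subst hxl; rw [hcl] at hx; omega
      · rw [hcx x hxl] at hx
        obtain ⟨⟨w, hw⟩, rfl⟩ := hs x hx
        refine ⟨w, ?_⟩
        have hwv : w ≠ v := hw
        have hwu : w ≠ u := by
          rintro rfl; exact hxl rfl
        rw [hlw w hwv hwu, hφ w hwv]
    · cases b
      · exact ⟨u, hlu⟩
      · exact ⟨v, hlv⟩
  · rintro (x | b) (y | c) hxy
    · have hxy' : T.Adj x y := hxy
      obtain ⟨S, hS, hSk⟩ := hk x y hxy'
      refine ⟨Sum.elim (· ∈ S) (fun _ => l ∈ S), ⟨hS.1, hS.2.1, ?_⟩, ?_⟩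
      · rintro (a | a) (b | b) ha hb hab
        · have := hS.2.2 a b ha hb hab
          rw [this.1, this.2]; exact ⟨rfl, rfl⟩
        · have h1 : a = l := hab
          subst h1; exact absurd ha hb
        · have h1 : b = l := hab
          subst h1; exact absurd ha hb
        · exact absurd hab id
      · have : lam' ⁻¹' (Sum.elim (· ∈ S) (fun _ => l ∈ S)) = φ ⁻¹' (lam ⁻¹' S) := by
          ext w
          change Sum.elim (· ∈ S) (fun _ => l ∈ S) (lam' w) ↔ lam (φ w) ∈ S
          by_cases h1 : w = v
          · subst h1; rw [hlv, hφv]; exact Iff.rfl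
          · by_cases h2 : w = u
            · subst h2; rw [hlu, hφ _ h1]; exact Iff.rfl
            · rw [hlw w h1 h2]; exact Iff.rfl
        rw [this]
        exact (rw_cutrk_comap_le G _ φ _ fun a b _ _ => hφadj a b).trans hSk
    · have h1 : x = l := hxy
      subst h1
      refine ⟨_, (hcutb c).compl, ?_⟩
      obtain ⟨w, hw, hpw⟩ := hpre c
      rw [Set.preimage_compl, hpw]
      exact (rw_cutrk_compl_le G _).trans (hsing w hw)
    · have h1 : y = l := hxy
      subst h1
      refine ⟨_, hcutb b, ?_⟩
      obtain ⟨w, hw, hpw⟩ := hpre b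
      rw [hpw]
      exact hsing w hw
    · exact absurd hxy id

end Extend

section Delete

/-- Delete the nodes `l`, `p` and join `q`, `r`. -/
def rwDel {W : Type*} (T : SimpleGraph W) (l p q r : W) (hqr : q ≠ r) :
    SimpleGraph {x : W // x ≠ l ∧ x ≠ p} where
  Adj a b := T.Adj a.1 b.1 ∨ (a.1 = q ∧ b.1 = r) ∨ (a.1 = r ∧ b.1 = q)
  symm := ⟨by
    rintro a b (h | h | h)
    · exact Or.inl h.symm
    · exact Or.inr (Or.inr ⟨h.2, h.1⟩)
    · exact Or.inr (Or.inl ⟨h.2, h.1⟩)⟩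
  loopless := ⟨by
    rintro a (h | h | h)
    · exact T.loopless.irrefl _ h
    · exact hqr (h.1.symm.trans h.2)
    · exact hqr (h.2.symm.trans h.1)⟩

theorem rw_delete {V : Type*} [Fintype V] (G : SimpleGraph V) (v : V) (hcard : 3 ≤ Nat.card V)
    (k : ℕ) (h : RWDecomp G k) : RWDecomp (G.induce ({v}ᶜ : Set V)) k := by
  classical
  obtain ⟨W, hW, T, lam, hT, h3, hinj, hl, hs, hk⟩ := h
  obtain ⟨l, hlv⟩ : ∃ l, l = lam v := ⟨_, rfl⟩
  have hl1 := hl v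
  rw [← hlv] at hl1
  obtain ⟨p, hp⟩ := Set.ncard_eq_one.1 hl1
  have hladj : ∀ z, T.Adj l z ↔ z = p := fun z => by
    rw [← SimpleGraph.mem_neighborSet, hp]; rfl
  have hlp : T.Adj l p := (hladj p).2 rfl
  have hp3 : (T.neighborSet p).ncard = 3 := by
    rcases h3 p with h1 | h1
    · exfalso
      obtain ⟨z, hz⟩ := Set.ncard_eq_one.1 h1
      have hpadj : ∀ w, T.Adj p w ↔ w = z := fun w => by
        rw [← SimpleGraph.mem_neighborSet, hz]; rfl
      have hzl : l = z := (hpadj l).1 hlp.symm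
      subst hzl
      have hall : ∀ w, w = l ∨ w = p := by
        intro w
        have := rw_reach_map (T' := (⊥ : SimpleGraph Prop)) (fun w => (w = l ∨ w = p))
          (fun a b hab => Or.inl (by
            apply propext
            constructor
            · rintro (rfl | rfl)
              · exact Or.inr ((hladj b).1 hab)
              · exact Or.inl ((hpadj b).1 hab)
            · rintro (rfl | rfl)
              · exact Or.inr ((hladj a).1 hab.symm)
              · exact Or.inl ((hpadj a).1 hab.symm))) (hT.preconnected l w)
        rw [SimpleGraph.reachable_bot] at this
        rw [← this]; exact Or.inl rfl
      have hc : Nat.card V ≤ Nat.card Bool := by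
        refine Nat.card_le_card_of_injective (fun w => decide (lam w = l)) ?_
        intro a b hab
        have hab' : lam a = l ↔ lam b = l := by simpa using hab
        apply hinj
        rcases hall (lam a) with h | h
        · rw [h, hab'.1 h]
        · rcases hall (lam b) with h' | h'
          · rw [h', hab'.2 h']
          · rw [h, h']
      simp at hc
      simp at hcard
      omega
    · exact h1
  have hpd : (T.neighborSet p \ {l}).ncard = 2 := by
    rw [Set.ncard_sdiff_singleton_of_mem (show l ∈ T.neighborSet p from hlp.symm), hp3]
  obtain ⟨q, r, hqr, hqre⟩ := Set.ncard_eq_two.1 hpd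
  have hpadj : ∀ z, T.Adj p z ↔ z = l ∨ z = q ∨ z = r := by
    intro z
    have h1 : z ∈ T.neighborSet p \ {l} ↔ z = q ∨ z = r := by rw [hqre]; rfl
    simp only [Set.mem_sdiff, SimpleGraph.mem_neighborSet, Set.mem_singleton_iff] at h1
    constructor
    · intro h
      by_cases hz : z = l
      · exact Or.inl hz
      · exact Or.inr (h1.1 ⟨h, hz⟩)
    · rintro (rfl | h)
      · exact hlp.symm
      · exact (h1.2 h).1
  have hql : q ≠ l ∧ r ≠ l := by
    have h1 : q ∈ T.neighborSet p \ {l} := by rw [hqre]; simp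
    have h2 : r ∈ T.neighborSet p \ {l} := by rw [hqre]; simp
    exact ⟨h1.2, h2.2⟩
  have hpq : T.Adj p q := (hpadj q).2 (by simp)
  have hpr : T.Adj p r := (hpadj r).2 (by simp)
  -- same side of a cut
  have hside : ∀ x y S, RWCut T x y S → ∀ a b, T.Adj a b → ¬ (a = x ∧ b = y) → ¬ (b = x ∧ a = y) →
      (a ∈ S ↔ b ∈ S) := by
    intro x y S hS a b hab h1 h2
    constructor
    · intro ha
      by_contra hb
      exact h1 (hS.2.2 a b ha hb hab)
    · intro hb
      by_contra ha
      exact h2 (hS.2.2 b a hb ha hab.symm)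
  have hnqr : ¬ T.Adj q r := by
    intro hadj
    obtain ⟨S, hS, _⟩ := hk q p hpq.symm
    have h1 := hside q p S hS p r hpr (fun h => hpq.ne h.1) (fun h => hqr h.1.symm)
    have hr : r ∉ S := fun h => hS.2.1 (h1.2 h)
    exact hpr.ne (hS.2.2 q r hS.1 hr hadj).2.symm
  let W' := {x : W // x ≠ l ∧ x ≠ p}
  let T' : SimpleGraph W' := rwDel T l p q r hqr
  let q' : W' := ⟨q, hql.1, hpq.ne.symm⟩
  let r' : W' := ⟨r, hql.2, hpr.ne.symm⟩
  have hT'adj : ∀ a b : W', T'.Adj a b ↔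
      T.Adj a.1 b.1 ∨ (a.1 = q ∧ b.1 = r) ∨ (a.1 = r ∧ b.1 = q) := fun a b => Iff.rfl
  -- degrees
  have hdeg : ∀ x : W', (T'.neighborSet x).ncard = (T.neighborSet x.1).ncard := by
    intro x
    rw [← Set.ncard_image_of_injective (T'.neighborSet x) Subtype.val_injective]
    have hxl : ¬ T.Adj x.1 l := fun h => x.2.2 ((hladj _).1 h.symm)
    have himg : ∀ z, z ∈ Subtype.val '' T'.neighborSet x ↔ z ≠ l ∧ z ≠ p ∧
        (T.Adj x.1 z ∨ (x.1 = q ∧ z = r) ∨ (x.1 = r ∧ z = q)) := by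
      intro z
      constructor
      · rintro ⟨y, hy, rfl⟩
        exact ⟨y.2.1, y.2.2, hy⟩
      · rintro ⟨h1, h2, h⟩
        exact ⟨⟨z, h1, h2⟩, h, rfl⟩
    by_cases hxq : x.1 = q
    · rw [← Set.ncard_exchange (s := T.neighborSet x.1) (a := r) (b := p)
        (by rw [hxq]; exact hnqr) (by rw [hxq]; exact hpq.symm)]
      congr 1
      ext z
      rw [himg]
      simp only [Set.mem_insert_iff, Set.mem_sdiff, SimpleGraph.mem_neighborSet,
        Set.mem_singleton_iff]
      constructor
      · rintro ⟨h1, h2, h | h | h⟩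
        · exact Or.inr ⟨h, h2⟩
        · exact Or.inl h.2
        · exact absurd (hxq.symm.trans h.1) hqr
      · rintro (rfl | ⟨h, h2⟩)
        · exact ⟨hql.2, hpr.ne.symm, Or.inr (Or.inl ⟨hxq, rfl⟩)⟩
        · exact ⟨fun h' => hxl (h' ▸ h), h2, Or.inl h⟩
    · by_cases hxr : x.1 = r
      · rw [← Set.ncard_exchange (s := T.neighborSet x.1) (a := q) (b := p)
          (by rw [hxr]; exact fun h => hnqr h.symm) (by rw [hxr]; exact hpr.symm)]
        congr 1
        ext z
        rw [himg]
        simp only [Set.mem_insert_iff, Set.mem_sdiff, SimpleGraph.mem_neighborSet,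
          Set.mem_singleton_iff]
        constructor
        · rintro ⟨h1, h2, h | h | h⟩
          · exact Or.inr ⟨h, h2⟩
          · exact absurd h.1 hxq
          · exact Or.inl h.2
        · rintro (rfl | ⟨h, h2⟩)
          · exact ⟨hql.1, hpq.ne.symm, Or.inr (Or.inr ⟨hxr, rfl⟩)⟩
          · exact ⟨fun h' => hxl (h' ▸ h), h2, Or.inl h⟩
      · congr 1
        ext z
        rw [himg]
        simp only [SimpleGraph.mem_neighborSet]
        constructor
        · rintro ⟨h1, h2, h | h | h⟩
          · exact h
          · exact absurd h.1 hxq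
          · exact absurd h.1 hxr
        · intro h
          refine ⟨fun h' => hxl (h' ▸ h), ?_, Or.inl h⟩
          rintro rfl
          rcases (hpadj _).1 h.symm with h' | h' | h'
          · exact x.2.1 h'
          · exact hxq h'
          · exact hxr h'
  have hlam : ∀ w : ({v}ᶜ : Set V), lam w.1 ≠ l ∧ lam w.1 ≠ p := by
    intro w
    constructor
    · intro h
      exact w.2 (hinj (h.trans hlv))
    · intro h
      have := hl w.1
      rw [h, hp3] at this
      omega
  let lam' : ({v}ᶜ : Set V) → W' := fun w => ⟨lam w.1, hlam w⟩
  have hrank : ∀ S : Set W, G.cutrk (lam ⁻¹' S) ≤ k →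
      (G.induce ({v}ᶜ : Set V)).cutrk (lam' ⁻¹' (Subtype.val ⁻¹' S)) ≤ k := by
    intro S hS
    exact (rw_cutrk_comap_le (G.induce ({v}ᶜ : Set V)) G Subtype.val (lam ⁻¹' S)
      fun a b _ _ => by simp).trans hS
  refine ⟨W', inferInstance, T', lam', ?_, ?_, ?_, ?_, ?_, ?_⟩
  · let f : W → W' := fun w => if hw : w ≠ l ∧ w ≠ p then ⟨w, hw⟩ else q'
    have hfl : f l = q' := by simp [f]
    have hfp : f p = q' := by simp [f]
    have hf : ∀ w : W', f w.1 = w := fun w => by simp [f, w.2.1, w.2.2]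
    have hfp' : ∀ b, T.Adj p b → f p = f b ∨ T'.Adj (f p) (f b) := by
      intro b hb
      rcases (hpadj b).1 hb with rfl | rfl | rfl
      · left; rw [hfl, hfp]
      · left; rw [hfp]; exact (hf q').symm
      · right; rw [hfp, show f b = r' from hf r']
        exact Or.inr (Or.inl ⟨rfl, rfl⟩)
    have hstep : ∀ a b, T.Adj a b → f a = f b ∨ T'.Adj (f a) (f b) := by
      intro a b hab
      by_cases hap : a = p
      · subst hap; exact hfp' b hab
      by_cases hbp : b = p
      · subst hbp
        exact (hfp' a hab.symm).imp Eq.symm (fun h => h.symm)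
      have hal : a ≠ l := by
        rintro rfl; exact hbp ((hladj b).1 hab)
      have hbl : b ≠ l := by
        rintro rfl; exact hap ((hladj a).1 hab.symm)
      right
      rw [show f a = ⟨a, hal, hap⟩ from hf ⟨a, hal, hap⟩,
        show f b = ⟨b, hbl, hbp⟩ from hf ⟨b, hbl, hbp⟩]
      exact Or.inl hab
    have : Nonempty W' := ⟨q'⟩
    refine SimpleGraph.Connected.mk fun a b => ?_
    have := rw_reach_map (T' := T') f hstep (hT.preconnected a.1 b.1)
    rwa [hf, hf] at this
  · intro w
    rw [hdeg]; exact h3 w.1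
  · intro a b hab
    exact Subtype.ext (hinj (congrArg Subtype.val hab))
  · intro w
    rw [hdeg]; exact hl w.1
  · intro w hw
    rw [hdeg] at hw
    obtain ⟨z, hz⟩ := hs w.1 hw
    refine ⟨⟨z, ?_⟩, Subtype.ext hz⟩
    rintro rfl
    exact w.2.1 (hz.symm.trans hlv.symm)
  · -- cuts
    have hnew : ∃ S, RWCut T' q' r' S ∧ (G.induce ({v}ᶜ : Set V)).cutrk (lam' ⁻¹' S) ≤ k := by
      obtain ⟨S, hS, hSk⟩ := hk q p hpq.symm
      have h1 := hside q p S hS p r hpr (fun h => hpq.ne h.1) (fun h => hqr h.1.symm)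
      have hr : r ∉ S := fun h => hS.2.1 (h1.2 h)
      refine ⟨Subtype.val ⁻¹' S, ⟨hS.1, hr, ?_⟩, hrank S hSk⟩
      rintro a b ha hb (h | h | h)
      · exact absurd (hS.2.2 _ _ ha hb h).2 b.2.2
      · exact ⟨Subtype.ext h.1, Subtype.ext h.2⟩
      · have ha' : a.1 ∈ S := ha
        rw [h.1] at ha'
        exact absurd ha' hr
    rintro x y (hxy | hxy | hxy)
    · obtain ⟨S, hS, hSk⟩ := hk _ _ hxy
      refine ⟨Subtype.val ⁻¹' S, ⟨hS.1, hS.2.1, ?_⟩, hrank S hSk⟩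
      have hq := hside _ _ S hS p q hpq (fun h => x.2.2 h.1.symm) (fun h => y.2.2 h.2.symm)
      have hr := hside _ _ S hS p r hpr (fun h => x.2.2 h.1.symm) (fun h => y.2.2 h.2.symm)
      rintro a b ha hb (h | h | h)
      · have := hS.2.2 _ _ ha hb h
        exact ⟨Subtype.ext this.1, Subtype.ext this.2⟩
      · have ha' : a.1 ∈ S := ha
        have hb' : b.1 ∉ S := hb
        rw [h.1] at ha'
        rw [h.2] at hb'
        exact absurd (hr.1 (hq.2 ha')) hb'
      · have ha' : a.1 ∈ S := ha
        have hb' : b.1 ∉ S := hb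
        rw [h.1] at ha'
        rw [h.2] at hb'
        exact absurd (hq.1 (hr.2 ha')) hb'
    · have h1 : x = q' := Subtype.ext hxy.1
      have h2 : y = r' := Subtype.ext hxy.2
      rw [h1, h2]; exact hnew
    · have h1 : x = r' := Subtype.ext hxy.1
      have h2 : y = q' := Subtype.ext hxy.2
      rw [h1, h2]
      obtain ⟨S, hS, hSk⟩ := hnew
      exact ⟨Sᶜ, hS.compl, (rw_cutrk_compl_le _ _).trans hSk⟩

end Delete

/-- Deleting one of two twins does not change the rankwidth: if `u ≠ v`,
`N_G(u) = N_G(v)`, and `G − v` has at least two vertices, then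
`rankwidth G = rankwidth (G − v)`. -/
theorem rankwidth_deleteTwin {V : Type*} [Fintype V] (G : SimpleGraph V) (u v : V)
    (huv : u ≠ v) (htwin : G.neighborSet u = G.neighborSet v)
    (hcard : 3 ≤ Nat.card V) :
    rankwidth G = rankwidth (G.induce ({v}ᶜ : Set V)) := by
  have hc : 2 ≤ Nat.card ({v}ᶜ : Set V) := by
    have h1 := Set.ncard_add_ncard_compl ({v} : Set V)
    rw [Set.ncard_singleton] at h1
    rw [Nat.card_coe_set_eq]
    omega
  unfold rankwidth
  congr 1
  ext k
  simp only [Set.mem_ofPred_eq]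
  rw [rw_decomp_iff G k (by omega), rw_decomp_iff _ k hc]
  exact ⟨rw_delete G v hcard k, rw_extend G u v huv htwin k⟩
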